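/- Let H be a torsion-free Hopf algebra over C[q,q⁻¹], C_q a unital subalgebra and left coideal of H, C_q^▽ the subalgebra of H^∨ generated by (q−1)⁻¹(C_q∩J), and C_q^Lsh-construction applied to C_q^▽ inside H^∨, i.e. (C_q^▽)^Lsh := { x ∈ C_q^▽ | δ_n(x) ∈ (q−1)ⁿ (H^∨)^{⊗(n−1)} ⊗ C_q^▽ ∀n ≥ 1 }. Then C_q ⊆ (C_q^▽)^Lsh, and consequently C_q^▽ = ((C_q^▽)^Lsh)^▽. -/

import Mathlib

set_option synthInstance.maxHeartbeats 1000000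
set_option maxHeartbeats 1000000

/- STATEMENT 17: reciprocity for left coideal subalgebras. For a unital subalgebra and
   left coideal C_q of a torsion-free Hopf algebra H over ℂ[q,q⁻¹] (an integral form of a
   ℂ(q)-Hopf algebra A), with C_q^▽ the subalgebra of H^∨ generated by (q−1)⁻¹(C_q ∩ J) and
   (C_q^▽)^Lsh := { x ∈ C_q^▽ | δ_n(x) ∈ (q−1)ⁿ(H^∨)^{⊗(n−1)}⊗C_q^▽ ∀n≥1 }, one has
   C_q ⊆ (C_q^▽)^Lsh and consequently C_q^▽ = ((C_q^▽)^Lsh)^▽. -/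

open scoped TensorProduct
open PiTensorProduct

namespace GQDP

/-- The ground ring `ℂ[q,q⁻¹]` of complex Laurent polynomials. -/
abbrev R : Type := LaurentPolynomial ℂ

/-- The field `ℂ(q)` of rational functions, realized as the fraction field of `ℂ[q,q⁻¹]`. -/
abbrev K : Type := FractionRing R

/-- The indeterminate `q`, as an element of `ℂ[q,q⁻¹]`. -/
noncomputable def q : R := LaurentPolynomial.T 1

/-- The indeterminate `q`, as an element of `ℂ(q)`. -/
noncomputable def qK : K := algebraMap R K q

/- `A` is a Hopf algebra over `ℂ(q)` (playing the role of `H ⊗_{ℂ[q,q⁻¹]} ℂ(q)`), in which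
   all the `ℂ[q,q⁻¹]`-integral forms below live as `R`-submodules. -/
variable (A : Type*) [Ring A] [HopfAlgebra K A] [Algebra R A] [IsScalarTower R K A]

/-- Scaling of an `R`-submodule of `A` by a scalar `c ∈ ℂ(q)`. -/
noncomputable def ksmul (c : K) (p : Submodule R A) : Submodule R A :=
  Submodule.span R ((fun a => c • a) '' (p : Set A))

/-- The "tensor product" of two `R`-submodules of `A` inside `A ⊗[ℂ(q)] A`: the additive
    subgroup generated by the corresponding pure tensors (this is also their `R`-span). -/
noncomputable def tsubK (P Q : Submodule R A) : AddSubgroup (A ⊗[K] A) :=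
  AddSubgroup.closure {z | ∃ p ∈ P, ∃ r ∈ Q, z = p ⊗ₜ[K] r}

/-- The augmentation ideal `J := H ∩ ker ε` of an integral form `H ⊆ A`. -/
noncomputable def Jform (H : Submodule R A) : Submodule R A :=
  H ⊓ (LinearMap.ker (Coalgebra.counit : A →ₗ[K] K)).restrictScalars R

/-- Drinfeld's algebra `H^∨ := Σ_{n≥0} (q−1)^{−n} Jⁿ`. -/
noncomputable def Hvee (H : Submodule R A) : Submodule R A :=
  ⨆ n : ℕ, ksmul A (((qK - 1)⁻¹) ^ n) ((Jform A H) ^ n)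

/-- `H` is a Hopf-algebra integral form of `A` over `ℂ[q,q⁻¹]`: a unital `R`-subalgebra,
    with `Δ(H) ⊆ H ⊗ H`, `ε(H) ⊆ ℂ[q,q⁻¹]` and `S(H) ⊆ H`. -/
structure IsHopfForm (H : Submodule R A) : Prop where
  one_mem : (1 : A) ∈ H
  mul_mem : ∀ x ∈ H, ∀ y ∈ H, x * y ∈ H
  comul_mem : ∀ x ∈ H, Coalgebra.comul (R := K) x ∈ tsubK A H H
  counit_mem : ∀ x ∈ H, ∃ r : R, Coalgebra.counit (R := K) x = algebraMap R K r
  antipode_mem : ∀ x ∈ H, HopfAlgebra.antipode (R := K) x ∈ H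

/-- The `n`-fold tensor power `A^{⊗n}` over `ℂ(q)`. -/
abbrev TPK (n : ℕ) := ⨂[K] (_ : Fin n), A

/-- The "tensor product" of a family of `R`-submodules `p i ⊆ A` inside `A^{⊗n}`: the
    additive subgroup generated by the pure tensors with `i`-th entry in `p i`. -/
noncomputable def tgrpK {n : ℕ} (p : Fin n → Submodule R A) : AddSubgroup (TPK A n) :=
  AddSubgroup.closure {z | ∃ f : Fin n → A, (∀ i, f i ∈ p i) ∧ z = PiTensorProduct.tprod K f}

/-- The canonical map `A ⊗ A^{⊗n} → A^{⊗(n+1)}`. -/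
noncomputable def stepK (n : ℕ) : (A ⊗[K] TPK A n) →ₗ[K] TPK A (n + 1) :=
  ((PiTensorProduct.reindex K (fun _ : Fin 1 ⊕ Fin n => A)
      (finSumFinEquiv.trans (finCongr (Nat.add_comm 1 n)))).toLinearMap
    ∘ₗ (PiTensorProduct.tmulEquiv (ι := Fin 1) (ι₂ := Fin n) K A).toLinearMap)
    ∘ₗ (LinearMap.rTensor (TPK A n)
      (PiTensorProduct.subsingletonEquiv (0 : Fin 1) : (⨂[K] (_ : Fin 1), A) ≃ₗ[K] A).symm.toLinearMap)

/-- The iterated coproduct `Δⁿ : A → A^{⊗n}`, with `Δ⁰ := ε` and `Δ^{n+1} := (id ⊗ Δⁿ) ∘ Δ`. -/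
noncomputable def DeltaIterK : (n : ℕ) → A →ₗ[K] TPK A n
  | 0 => (PiTensorProduct.isEmptyEquiv (ι := Fin 0)).symm.toLinearMap
          ∘ₗ (Coalgebra.counit : A →ₗ[K] K)
  | n + 1 => stepK A n ∘ₗ LinearMap.lTensor A (DeltaIterK n)
              ∘ₗ (Coalgebra.comul : A →ₗ[K] A ⊗[K] A)

/-- `δ_n := (id − η∘ε)^{⊗n} ∘ Δⁿ : A → A^{⊗n}`. -/
noncomputable def deltaNK (n : ℕ) : A →ₗ[K] TPK A n :=
  (PiTensorProduct.map fun _ =>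
      (LinearMap.id : A →ₗ[K] A) - Algebra.linearMap K A ∘ₗ (Coalgebra.counit : A →ₗ[K] K))
    ∘ₗ DeltaIterK A n

/-- `C^▽`: the unital `R`-subalgebra of `A` generated by `(q−1)⁻¹·(C ∩ ker ε)`. -/
noncomputable def Cvee (C : Submodule R A) : Subalgebra R A :=
  Algebra.adjoin R
    ((ksmul A ((qK - 1)⁻¹)
      (C ⊓ (LinearMap.ker (Coalgebra.counit : A →ₗ[K] K)).restrictScalars R) : Submodule R A) : Set A)

/-- The Drinfeld-type transform `(C^▽)^Lsh` relative to `H^∨`. -/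
noncomputable def CveeLsh (H C : Submodule R A) : Set A :=
  {x | x ∈ Cvee A C ∧ ∀ n : ℕ,
    ∃ y ∈ tgrpK A (fun i : Fin (n + 1) =>
        if i = Fin.last n then Subalgebra.toSubmodule (Cvee A C) else Hvee A H),
      deltaNK A (n + 1) x = ((qK - 1) ^ (n + 1)) • y}

/-!
Iterating the coideal property gives `Δⁿ(c) ∈ H^{⊗(n−1)} ⊗ C` for `c ∈ C`. Since `1 ∈ C` and
`ε(H) ⊆ ℂ[q,q⁻¹]`, the projection `id − η∘ε` sends `H` to `J` and `C` to `C ∩ J`, so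
`δ_n(c) ∈ J^{⊗(n−1)} ⊗ (C ∩ J)`; dividing each factor by `q − 1` lands in
`(H^∨)^{⊗(n−1)} ⊗ C^▽` at the cost of the scalar `(q − 1)ⁿ`. Conversely `δ_1` is the identity on
`ker ε`, so the condition `n = 1` alone forces `(q − 1)⁻¹ x ∈ C^▽` for every
`x ∈ (C^▽)^Lsh ∩ ker ε`.
-/

theorem qK_sub_one_ne_zero : qK - 1 ≠ 0 := by
  have hq : q ≠ 1 := fun h => one_ne_zero
    (AddMonoidAlgebra.single_left_injective (one_ne_zero (α := ℂ)) h)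
  rw [sub_ne_zero, ← map_one (algebraMap R K)]
  exact (IsFractionRing.injective R K).ne hq

section AugmentationProjection

variable (k B : Type*) [CommRing k] [Ring B]

/-- The endomorphism `id − η∘ε` of an algebra with unit `η` and counit `ε`; its tensor powers turn
the iterated coproducts `Δⁿ` into the maps `δ_n`. -/
def augProj [Algebra k B] [Coalgebra k B] : B →ₗ[k] B :=
  LinearMap.id - Algebra.linearMap k B ∘ₗ Coalgebra.counit

variable {k B}

theorem augProj_apply [Algebra k B] [Coalgebra k B] (b : B) :
    augProj k B b = b - algebraMap k B (Coalgebra.counit b) := rfl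

theorem augProj_of_counit_eq_zero [Algebra k B] [Coalgebra k B] {b : B}
    (hb : Coalgebra.counit (R := k) b = 0) : augProj k B b = b := by
  rw [augProj_apply, hb, map_zero, sub_zero]

theorem counit_augProj [Bialgebra k B] (b : B) :
    Coalgebra.counit (R := k) (augProj k B b) = 0 := by
  rw [augProj_apply, map_sub, Bialgebra.counit_algebraMap, sub_self]

end AugmentationProjection

section TensorFactors

/-- The family `(P, …, P, Q)` of length `n + 1`, listing the factors of `P^{⊗n} ⊗ Q`. -/
def constWithLast {α : Type*} (P Q : α) (n : ℕ) : Fin (n + 1) → α :=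
  fun i => if i = Fin.last n then Q else P

theorem constWithLast_zero {α : Type*} (P Q : α) (i : Fin 1) : constWithLast P Q 0 i = Q :=
  if_pos (Subsingleton.elim (α := Fin 1) _ _)

theorem cons_constWithLast {α : Type*} (P Q : α) (n : ℕ) :
    (Fin.cons P (constWithLast P Q n) : Fin (n + 2) → α) = constWithLast P Q (n + 1) := by
  funext i
  cases i using Fin.cases with
  | zero => simp [constWithLast, Fin.ext_iff]
  | succ j => simp [constWithLast, ← Fin.succ_last]

theorem piTensorProduct_map_smul {k ι : Type*} [CommSemiring k] [Fintype ι] {M N : ι → Type*}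
    [∀ i, AddCommMonoid (M i)] [∀ i, Module k (M i)]
    [∀ i, AddCommMonoid (N i)] [∀ i, Module k (N i)] (c : k) (g : ∀ i, M i →ₗ[k] N i) :
    PiTensorProduct.map (fun i => c • g i) = c ^ Fintype.card ι • PiTensorProduct.map g := by
  simpa using (PiTensorProduct.mapMultilinear k M N).map_smul_univ (fun _ => c) g

end TensorFactors

section IteratedCoproduct

variable {A}

omit [Algebra R A] [IsScalarTower R K A]

theorem stepK_tmul_tprod (n : ℕ) (a : A) (f : Fin n → A) :
    stepK A n (a ⊗ₜ[K] PiTensorProduct.tprod K f) =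
      PiTensorProduct.tprod K (Fin.cons a f : Fin (n + 1) → A) := by
  have hsingle : (PiTensorProduct.subsingletonEquiv (0 : Fin 1) :
      (⨂[K] (_ : Fin 1), A) ≃ₗ[K] A).symm a = PiTensorProduct.tprod K (fun _ => a) := by
    rw [LinearEquiv.symm_apply_eq, PiTensorProduct.subsingletonEquiv_apply_tprod]
  simp only [stepK, LinearMap.comp_apply, LinearMap.rTensor_tmul, LinearEquiv.coe_coe, hsingle]
  rw [PiTensorProduct.tmulEquiv_apply, PiTensorProduct.reindex_tprod]
  congr 1
  funext i
  obtain ⟨j, rfl⟩ := (finSumFinEquiv.trans (finCongr (Nat.add_comm 1 n))).surjective i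
  rw [Equiv.symm_apply_apply]
  cases j with
  | inl j => rw [Subsingleton.elim j 0]; rfl
  | inr j => simp

theorem DeltaIterK_one (a : A) :
    DeltaIterK A 1 a = PiTensorProduct.tprod K (fun _ => a) := by
  have hunit : (PiTensorProduct.isEmptyEquiv (R := K) (s := fun _ : Fin 0 => A) (Fin 0)).symm 1 =
      PiTensorProduct.tprod K Fin.elim0 := by
    rw [LinearEquiv.symm_apply_eq, PiTensorProduct.isEmptyEquiv_apply_tprod]
  simp only [DeltaIterK, LinearMap.comp_apply, LinearMap.lTensor_comp,
    Coalgebra.lTensor_counit_comul, LinearMap.lTensor_tmul, LinearEquiv.coe_coe, hunit]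
  rw [stepK_tmul_tprod]
  congr 1
  funext i
  rw [Subsingleton.elim (α := Fin 1) i 0, Fin.cons_zero]

theorem deltaNK_eq_map_augProj (n : ℕ) :
    deltaNK A n = PiTensorProduct.map (fun _ => augProj K A) ∘ₗ DeltaIterK A n := rfl

theorem deltaNK_one (a : A) :
    deltaNK A 1 a = PiTensorProduct.tprod K (fun _ => augProj K A a) := by
  rw [deltaNK_eq_map_augProj, LinearMap.comp_apply, DeltaIterK_one, PiTensorProduct.map_tprod]

end IteratedCoproduct

section IntegralTensors

variable {A}

omit [IsScalarTower R K A]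

theorem map_mem_of_mem_tsubK {M : Type*} [AddCommGroup M] [Module K M] {P Q : Submodule R A}
    {G : AddSubgroup M} (φ : A ⊗[K] A →ₗ[K] M) (hφ : ∀ a ∈ P, ∀ b ∈ Q, φ (a ⊗ₜ b) ∈ G)
    {z : A ⊗[K] A} (hz : z ∈ tsubK A P Q) : φ z ∈ G := by
  refine (AddSubgroup.closure_le (G.comap φ.toAddMonoidHom)).2 ?_ hz
  rintro _ ⟨a, ha, b, hb, rfl⟩
  exact hφ a ha b hb

theorem tprod_mem_tgrpK {n : ℕ} {p : Fin n → Submodule R A} {f : Fin n → A}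
    (hf : ∀ i, f i ∈ p i) : PiTensorProduct.tprod K f ∈ tgrpK A p :=
  AddSubgroup.subset_closure ⟨f, hf, rfl⟩

theorem map_mem_of_mem_tgrpK {M : Type*} [AddCommGroup M] [Module K M] {n : ℕ}
    {p : Fin n → Submodule R A} {G : AddSubgroup M} (φ : TPK A n →ₗ[K] M)
    (hφ : ∀ f : Fin n → A, (∀ i, f i ∈ p i) → φ (PiTensorProduct.tprod K f) ∈ G)
    {z : TPK A n} (hz : z ∈ tgrpK A p) : φ z ∈ G := by
  refine (AddSubgroup.closure_le (G.comap φ.toAddMonoidHom)).2 ?_ hz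
  rintro _ ⟨f, hf, rfl⟩
  exact hφ f hf

theorem piTensorProduct_map_mem_tgrpK {n : ℕ} {p p' : Fin n → Submodule R A}
    {g : Fin n → A →ₗ[K] A} (hg : ∀ i, Set.MapsTo (g i) (p i) (p' i)) {z : TPK A n}
    (hz : z ∈ tgrpK A p) : PiTensorProduct.map g z ∈ tgrpK A p' := by
  refine map_mem_of_mem_tgrpK (PiTensorProduct.map g) (fun f hf => ?_) hz
  rw [PiTensorProduct.map_tprod]
  exact tprod_mem_tgrpK fun i => hg i (hf i)

theorem subsingletonEquiv_mem_of_mem_tgrpK {p : Fin 1 → Submodule R A} {z : TPK A 1}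
    (hz : z ∈ tgrpK A p) : PiTensorProduct.subsingletonEquiv (0 : Fin 1) z ∈ p 0 := by
  refine map_mem_of_mem_tgrpK (G := (p 0).toAddSubgroup)
    (PiTensorProduct.subsingletonEquiv (0 : Fin 1)).toLinearMap (fun f hf => ?_) hz
  rw [LinearEquiv.coe_coe, PiTensorProduct.subsingletonEquiv_apply_tprod]
  exact hf 0

theorem stepK_tmul_mem_tgrpK {n : ℕ} {P : Submodule R A} {p : Fin n → Submodule R A} {a : A}
    (ha : a ∈ P) {z : TPK A n} (hz : z ∈ tgrpK A p) :
    stepK A n (a ⊗ₜ z) ∈ tgrpK A (Fin.cons P p : Fin (n + 1) → Submodule R A) := by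
  refine map_mem_of_mem_tgrpK (stepK A n ∘ₗ TensorProduct.mk K A (TPK A n) a) (fun f hf => ?_) hz
  rw [LinearMap.comp_apply, TensorProduct.mk_apply, stepK_tmul_tprod]
  exact tprod_mem_tgrpK (Fin.cases ha hf)

theorem DeltaIterK_succ_mem_tgrpK {H C : Submodule R A}
    (hC : ∀ c ∈ C, Coalgebra.comul (R := K) c ∈ tsubK A H C) (n : ℕ) {c : A} (hc : c ∈ C) :
    DeltaIterK A (n + 1) c ∈ tgrpK A (constWithLast H C n) := by
  induction n generalizing c with
  | zero =>
    rw [DeltaIterK_one]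
    exact tprod_mem_tgrpK fun i => (constWithLast_zero H C i).symm ▸ hc
  | succ n ih =>
    refine map_mem_of_mem_tsubK (stepK A (n + 1) ∘ₗ LinearMap.lTensor A (DeltaIterK A (n + 1)))
      (fun a ha b hb => ?_) (hC c hc)
    rw [LinearMap.comp_apply, LinearMap.lTensor_tmul, ← cons_constWithLast]
    exact stepK_tmul_mem_tgrpK ha (ih hb)

theorem exists_deltaNK_succ_eq_smul {H C H' C' : Submodule R A} {t : K} (ht : t ≠ 0)
    (hH : Set.MapsTo (t⁻¹ • augProj K A) H H') (hC : Set.MapsTo (t⁻¹ • augProj K A) C C')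
    (hcoideal : ∀ c ∈ C, Coalgebra.comul (R := K) c ∈ tsubK A H C)
    (n : ℕ) {c : A} (hc : c ∈ C) :
    ∃ y ∈ tgrpK A (constWithLast H' C' n), deltaNK A (n + 1) c = t ^ (n + 1) • y := by
  refine ⟨PiTensorProduct.map (fun _ => t⁻¹ • augProj K A) (DeltaIterK A (n + 1) c),
    piTensorProduct_map_mem_tgrpK (fun i => ?_) (DeltaIterK_succ_mem_tgrpK hcoideal n hc), ?_⟩
  · unfold constWithLast
    split_ifs
    exacts [hC, hH]
  · rw [piTensorProduct_map_smul, Fintype.card_fin, LinearMap.smul_apply, inv_pow,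
      smul_inv_smul₀ (pow_ne_zero _ ht), deltaNK_eq_map_augProj, LinearMap.comp_apply]

end IntegralTensors

section DrinfeldTransforms

variable {A} {H C : Submodule R A}

theorem augProj_mem_Jform (h1 : (1 : A) ∈ C) {a : A} (ha : a ∈ C)
    (hε : ∃ r : R, Coalgebra.counit (R := K) a = algebraMap R K r) :
    augProj K A a ∈ Jform A C := by
  obtain ⟨r, hr⟩ := hε
  refine ⟨?_, counit_augProj a⟩
  rw [augProj_apply, hr, Algebra.algebraMap_eq_smul_one, algebraMap_smul]
  exact C.sub_mem ha (C.smul_mem r h1)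

theorem Cvee_eq_adjoin_image : Cvee A C = Algebra.adjoin R
    ((fun a => (qK - 1)⁻¹ • a) '' ((C : Set A) ∩ {x | Coalgebra.counit (R := K) x = 0})) :=
  Algebra.adjoin_span R

theorem inv_smul_mem_Cvee {a : A} (ha : a ∈ Jform A C) : (qK - 1)⁻¹ • a ∈ Cvee A C :=
  Algebra.subset_adjoin (Submodule.subset_span ⟨a, ha, rfl⟩)

theorem inv_smul_mem_Hvee {a : A} (ha : a ∈ Jform A H) : (qK - 1)⁻¹ • a ∈ Hvee A H := by
  refine Submodule.mem_iSup_of_mem 1 ?_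
  rw [pow_one, pow_one]
  exact Submodule.subset_span ⟨a, ha, rfl⟩

theorem mem_Cvee_of_mem (h1 : (1 : A) ∈ C) {c : A} (hc : c ∈ C)
    (hε : ∃ r : R, Coalgebra.counit (R := K) c = algebraMap R K r) : c ∈ Cvee A C := by
  have hproj : augProj K A c ∈ Cvee A C := by
    have hsmul := (Cvee A C).smul_mem (inv_smul_mem_Cvee (augProj_mem_Jform h1 hc hε)) (q - 1)
    rwa [← algebraMap_smul K (q - 1), map_sub, map_one, ← qK,
      smul_inv_smul₀ qK_sub_one_ne_zero] at hsmul
  obtain ⟨r, hr⟩ := hε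
  rw [augProj_apply, hr, ← IsScalarTower.algebraMap_apply] at hproj
  simpa only [sub_add_cancel] using add_mem hproj (algebraMap_mem (Cvee A C) r)

theorem subset_CveeLsh (hε : ∀ x ∈ H, ∃ r : R, Coalgebra.counit (R := K) x = algebraMap R K r)
    (hCH : C ≤ H) (hC1 : (1 : A) ∈ C)
    (hcoideal : ∀ c ∈ C, Coalgebra.comul (R := K) c ∈ tsubK A H C) :
    (C : Set A) ⊆ CveeLsh A H C := fun c hc =>
  ⟨mem_Cvee_of_mem hC1 hc (hε c (hCH hc)), fun n => exists_deltaNK_succ_eq_smul qK_sub_one_ne_zero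
    (fun a ha => inv_smul_mem_Hvee (augProj_mem_Jform (hCH hC1) ha (hε a ha)))
    (fun a ha => inv_smul_mem_Cvee (augProj_mem_Jform hC1 ha (hε a (hCH ha)))) hcoideal n hc⟩

theorem inv_smul_mem_Cvee_of_mem_CveeLsh {x : A} (hx : x ∈ CveeLsh A H C)
    (hε : Coalgebra.counit (R := K) x = 0) : (qK - 1)⁻¹ • x ∈ Cvee A C := by
  obtain ⟨y, hy, hxy⟩ : ∃ y ∈ tgrpK A (constWithLast (Hvee A H) (Cvee A C).toSubmodule 0),
    deltaNK A 1 x = (qK - 1) ^ (1 : ℕ) • y := hx.2 0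
  have hyC := subsingletonEquiv_mem_of_mem_tgrpK hy
  rw [constWithLast_zero] at hyC
  rw [pow_one, deltaNK_one, augProj_of_counit_eq_zero hε] at hxy
  have hxy' : x = (qK - 1) • PiTensorProduct.subsingletonEquiv (0 : Fin 1) y := by
    rw [← map_smul, ← hxy, PiTensorProduct.subsingletonEquiv_apply_tprod]
  rw [hxy', inv_smul_smul₀ qK_sub_one_ne_zero]
  exact hyC

theorem C_subset_CveeLsh_and_idem_general
    (hε : ∀ x ∈ H, ∃ r : R, Coalgebra.counit (R := K) x = algebraMap R K r)
    (hCH : C ≤ H) (hC1 : (1 : A) ∈ C)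
    (hCcoideal : ∀ c ∈ C, Coalgebra.comul (R := K) c ∈ tsubK A H C) :
    ((C : Set A) ⊆ CveeLsh A H C) ∧
    Cvee A C =
      Algebra.adjoin R
        ((fun a => (qK - 1)⁻¹ • a) ''
          (CveeLsh A H C ∩ {x : A | Coalgebra.counit (R := K) x = 0})) := by
  have hsub : (C : Set A) ⊆ CveeLsh A H C := subset_CveeLsh hε hCH hC1 hCcoideal
  refine ⟨hsub, le_antisymm ?_ (Algebra.adjoin_le ?_)⟩
  · rw [Cvee_eq_adjoin_image]
    exact Algebra.adjoin_mono (Set.image_mono (Set.inter_subset_inter_left _ hsub))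
  · rintro _ ⟨x, ⟨hx, hεx⟩, rfl⟩
    exact inv_smul_mem_Cvee_of_mem_CveeLsh hx hεx

end DrinfeldTransforms

/-- `C_q ⊆ (C_q^▽)^Lsh`, and consequently `C_q^▽ = ((C_q^▽)^Lsh)^▽`,
    where the second `▽` is the subalgebra generated by
    `(q−1)⁻¹((C_q^▽)^Lsh ∩ ker ε)`. -/
theorem C_subset_CveeLsh_and_idem (H C : Submodule R A) (hH : IsHopfForm A H)
    (hCH : C ≤ H)
    (hC1 : (1 : A) ∈ C) (hCmul : ∀ x ∈ C, ∀ y ∈ C, x * y ∈ C)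
    (hCcoideal : ∀ c ∈ C, Coalgebra.comul (R := K) c ∈ tsubK A H C) :
    ((C : Set A) ⊆ CveeLsh A H C) ∧
    Cvee A C =
      Algebra.adjoin R
        ((fun a => (qK - 1)⁻¹ • a) ''
          (CveeLsh A H C ∩ {x : A | Coalgebra.counit (R := K) x = 0})) :=
  C_subset_CveeLsh_and_idem_general hH.counit_mem hCH hC1 hCcoideal

end GQDP
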